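/- Let T = (V, root, par) be a narrow rooted directed tree, so that the Cesàro operator C_T is bounded on ℓ²(V), and let C_T* denote its Hilbert-space adjoint. Then every λ ∈ ℂ with |λ − 1| < 1 is an eigenvalue of C_T*: there exists a nonzero g ∈ ℓ²(V) with C_T* g = λ g. -/

import Mathlib

noncomputable section

open scoped ENNReal

/-- A rooted directed tree encoded by a vertex set `V`, a root, and a parent map. -/
structure TreeData (V : Type) where
  root : V
  par : V → V
  par_root : par root = root
  hroot : ∀ v : V, ∃ n : ℕ, par^[n] v = root

namespace TreeData

variable {V : Type}

open scoped Classical in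
/-- The depth of a vertex: the least `n` with `par^[n] v = root`. -/
def dep (T : TreeData V) (v : V) : ℕ := Nat.find (T.hroot v)

/-- The Cesàro map `Λ_T`. -/
def cesaro (T : TreeData V) (f : V → ℂ) : V → ℂ := fun v =>
  ((T.dep v : ℂ) + 1)⁻¹ * ∑ j ∈ Finset.range (T.dep v + 1), f (T.par^[j] v)

/-- The `n`-th level `Chi^⟨n⟩(root)`: vertices of depth `n`. -/
def level (T : TreeData V) (n : ℕ) : Set V := {v : V | T.dep v = n}

/-- The set of children of a vertex. -/
def chi (T : TreeData V) (u : V) : Set V := {v : V | v ≠ T.root ∧ T.par v = u}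

end TreeData

/-- The Hilbert space `ℓ²(V)` of square-summable complex functions on `V`. -/
abbrev L2 (V : Type) : Type := lp (fun _ : V => ℂ) 2

/-!
Restricting to an infinite ray `p` from the root turns `C_T` into the classical Cesàro operator on
`ℓ²(ℕ)`: the ancestors of `p n` are `p 0, …, p n`. For `g` supported on the ray, with
`g (p n) = b n`, the equation `C_T* g = lam • g` reads `∑_{n ≥ N} b n / (n + 1) = lam * b N`, i.e.
`b (n + 1) = (1 - μ / (n + 1)) * b n` with `μ = lam⁻¹` together with `b n → 0`. Since `n * |b n|²`
decreases by about `(2 Re μ - 1) * |b n|²` at each step, `b` is square-summable as soon as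
`Re μ > 1/2`, which is the condition `|lam - 1| < 1`.

A ray exists by Kőnig's lemma, because a tree with bounded Cesàro operator is locally finite:
`C_T e_u` is square-summable and takes the same nonzero value at all children of `u`.
-/

open Filter Topology

section Sequences

theorem summable_of_eventually_le_sub_succ {a u : ℕ → ℝ} (ha : ∀ n, 0 ≤ a n) (hu : ∀ n, 0 ≤ u n)
    (hau : ∀ᶠ n in atTop, a n ≤ u n - u (n + 1)) : Summable a := by
  obtain ⟨K, hK⟩ := eventually_atTop.1 hau
  rw [← summable_nat_add_iff K]
  refine summable_of_sum_range_le (c := u K) (fun n => ha _) fun n => ?_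
  calc ∑ i ∈ Finset.range n, a (i + K)
      ≤ ∑ i ∈ Finset.range n, (u (i + K) - u (i + 1 + K)) := by
        refine Finset.sum_le_sum fun i _ => ?_
        rw [Nat.add_right_comm]
        exact hK _ (Nat.le_add_left K i)
    _ = u K - u (n + K) := by
        rw [Finset.sum_range_sub' fun i => u (i + K), Nat.zero_add]
    _ ≤ u K := sub_le_self _ (hu _)

theorem hasSum_sub_succ_of_tendsto_zero {E : Type*} [AddCommGroup E] [TopologicalSpace E]
    [IsTopologicalAddGroup E] [T2Space E] {u : ℕ → E} (hu : Tendsto u atTop (𝓝 0))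
    (hsum : Summable fun n => u n - u (n + 1)) : HasSum (fun n => u n - u (n + 1)) (u 0) := by
  rw [hsum.hasSum_iff_tendsto_nat]
  simpa only [Finset.sum_range_sub', sub_zero] using hu.const_sub (u 0)

theorem memℓp_extend {ι κ E : Type*} [NormedAddCommGroup E] {q : ℝ≥0∞} (hq : 0 < q.toReal)
    {p : ι → κ} (hp : Function.Injective p) {b : ι → E} (hb : Memℓp b q) :
    Memℓp (Function.extend p b 0) q := by
  rw [memℓp_gen_iff hq] at hb ⊢
  rw [← hp.summable_iff]
  · simpa only [Function.comp_def, hp.extend_apply] using hb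
  · intro v hv
    rw [Function.extend_apply' _ _ _ hv, Pi.zero_apply, norm_zero, Real.zero_rpow hq.ne']

end Sequences

section Coefficients

theorem one_half_lt_re_inv {z : ℂ} (hz : ‖z - 1‖ < 1) : 1 / 2 < z⁻¹.re := by
  have hz0 : z ≠ 0 := by
    rintro rfl
    simp at hz
  have hsq : Complex.normSq (z - 1) < 1 := by
    rw [Complex.normSq_eq_norm_sq]
    exact pow_lt_one₀ (norm_nonneg _) hz two_ne_zero
  rw [Complex.inv_re, lt_div_iff₀ (Complex.normSq_pos.2 hz0)]
  simp only [Complex.normSq_apply, Complex.sub_re, Complex.sub_im, Complex.one_re,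
    Complex.one_im] at hsq ⊢
  linarith

/-- The coefficients `∏_{k < n} (1 - μ / (k + 1))`, i.e. `(-1) ^ n` times the binomial coefficient
`μ - 1` over `n`: the solution of the eigenvalue equation of the adjoint Cesàro operator along a
ray, for the eigenvalue `μ⁻¹`. -/
def cesaroCoeff (μ : ℂ) (n : ℕ) : ℂ := ∏ k ∈ Finset.range n, (1 - μ / (k + 1))

theorem cesaroCoeff_zero (μ : ℂ) : cesaroCoeff μ 0 = 1 := Finset.prod_range_zero _

theorem cesaroCoeff_succ (μ : ℂ) (n : ℕ) :
    cesaroCoeff μ (n + 1) = cesaroCoeff μ n * (1 - μ / (n + 1)) := Finset.prod_range_succ _ _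

theorem cesaroCoeff_sub_succ (μ : ℂ) (n : ℕ) :
    cesaroCoeff μ n - cesaroCoeff μ (n + 1) = μ * ((n + 1 : ℂ)⁻¹ * cesaroCoeff μ n) := by
  rw [cesaroCoeff_succ]
  ring

theorem norm_one_sub_div_sq (μ : ℂ) (x : ℝ) :
    ‖1 - μ / x‖ ^ 2 = 1 - 2 * μ.re / x + ‖μ‖ ^ 2 / x ^ 2 := by
  simp only [← Complex.normSq_eq_norm_sq, Complex.normSq_apply, Complex.sub_re, Complex.sub_im,
    Complex.one_re, Complex.one_im, Complex.div_ofReal_re, Complex.div_ofReal_im]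
  ring

theorem mul_norm_sq_cesaroCoeff_sub_succ (μ : ℂ) (n : ℕ) :
    n * ‖cesaroCoeff μ n‖ ^ 2 - (n + 1 : ℕ) * ‖cesaroCoeff μ (n + 1)‖ ^ 2 =
      (2 * μ.re - 1 - ‖μ‖ ^ 2 / (n + 1)) * ‖cesaroCoeff μ n‖ ^ 2 := by
  have hn : (n : ℝ) + 1 ≠ 0 := n.cast_add_one_ne_zero
  have hfactor := norm_one_sub_div_sq μ (n + 1)
  push_cast at hfactor ⊢
  rw [cesaroCoeff_succ, norm_mul, mul_pow, hfactor]
  field_simp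
  ring

variable {μ : ℂ}

theorem summable_norm_sq_cesaroCoeff (hμ : 1 / 2 < μ.re) :
    Summable fun n => ‖cesaroCoeff μ n‖ ^ 2 := by
  set d := μ.re - 1 / 2 with hd
  have hd0 : 0 < d := sub_pos.2 hμ
  have hsmall : ∀ᶠ n : ℕ in atTop, ‖μ‖ ^ 2 / ((n : ℝ) + 1) < d := by
    have hlim := (tendsto_const_div_atTop_nhds_zero_nat (‖μ‖ ^ 2)).comp (tendsto_add_atTop_nat 1)
    simpa only [Function.comp_apply, Nat.cast_add_one] using hlim.eventually_lt_const hd0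
  rw [← summable_mul_left_iff hd0.ne']
  refine summable_of_eventually_le_sub_succ (u := fun n => n * ‖cesaroCoeff μ n‖ ^ 2)
    (fun n => by positivity) (fun n => by positivity) ?_
  filter_upwards [hsmall] with n hn
  rw [mul_norm_sq_cesaroCoeff_sub_succ]
  gcongr
  linarith

theorem memℓp_cesaroCoeff (hμ : 1 / 2 < μ.re) : Memℓp (cesaroCoeff μ) 2 :=
  memℓp_gen <| by simpa using summable_norm_sq_cesaroCoeff hμ

theorem tendsto_cesaroCoeff_zero (hμ : 1 / 2 < μ.re) : Tendsto (cesaroCoeff μ) atTop (𝓝 0) := by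
  rw [tendsto_zero_iff_norm_tendsto_zero]
  simpa using (summable_norm_sq_cesaroCoeff hμ).tendsto_atTop_zero.sqrt

theorem summable_inv_mul_cesaroCoeff (hμ : 1 / 2 < μ.re) :
    Summable fun n : ℕ => (n + 1 : ℂ)⁻¹ * cesaroCoeff μ n := by
  have hinv : Summable fun n : ℕ => ((n + 1 : ℝ)⁻¹) ^ 2 := by
    simpa using (summable_nat_add_iff 1).2 (Real.summable_nat_pow_inv.2 one_lt_two)
  refine (hinv.add (summable_norm_sq_cesaroCoeff hμ)).of_norm_bounded fun n => ?_
  have hnorm : ‖(n + 1 : ℂ)⁻¹‖ = (n + 1 : ℝ)⁻¹ := by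
    rw [norm_inv, ← Nat.cast_add_one, Complex.norm_natCast, Nat.cast_add_one]
  rw [norm_mul, hnorm]
  have hamgm := two_mul_le_add_sq (n + 1 : ℝ)⁻¹ ‖cesaroCoeff μ n‖
  have hnonneg : 0 ≤ (n + 1 : ℝ)⁻¹ * ‖cesaroCoeff μ n‖ := by positivity
  linarith

theorem hasSum_inv_mul_cesaroCoeff (hμ : 1 / 2 < μ.re) (N : ℕ) :
    HasSum (fun n : ℕ => ((n + N : ℕ) + 1 : ℂ)⁻¹ * cesaroCoeff μ (n + N))
      (μ⁻¹ * cesaroCoeff μ N) := by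
  have hμ0 : μ ≠ 0 := by
    rintro rfl
    norm_num at hμ
  have hstep (n : ℕ) : cesaroCoeff μ (n + N) - cesaroCoeff μ (n + 1 + N) =
      μ * (((n + N : ℕ) + 1 : ℂ)⁻¹ * cesaroCoeff μ (n + N)) := by
    rw [Nat.add_right_comm, cesaroCoeff_sub_succ]
  have htail := hasSum_sub_succ_of_tendsto_zero (u := fun n => cesaroCoeff μ (n + N))
    ((tendsto_add_atTop_iff_nat N).2 (tendsto_cesaroCoeff_zero hμ)) <| by
      simp only [hstep]
      exact ((summable_nat_add_iff N).2 (summable_inv_mul_cesaroCoeff hμ)).mul_left μ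
  simp only [hstep, Nat.zero_add] at htail
  simpa only [inv_mul_cancel_left₀ hμ0] using htail.mul_left μ⁻¹

end Coefficients

namespace TreeData

variable {V : Type} (T : TreeData V)

section Depth

theorem iterate_par_dep (v : V) : T.par^[T.dep v] v = T.root := by
  classical exact Nat.find_spec (T.hroot v)

theorem dep_root : T.dep T.root = 0 := by
  classical exact (Nat.find_eq_zero _).2 rfl

theorem dep_eq_dep_par_add_one {v : V} (hv : v ≠ T.root) : T.dep v = T.dep (T.par v) + 1 := by
  classical exact Nat.find_comp_succ (T.hroot v) (T.hroot (T.par v)) hv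

theorem dep_iterate_par (k : ℕ) (v : V) : T.dep (T.par^[k] v) = T.dep v - k := by
  induction k generalizing v with
  | zero => rfl
  | succ k ih =>
    rw [Function.iterate_succ_apply, ih]
    obtain rfl | hv := eq_or_ne v T.root
    · simp only [T.par_root, T.dep_root, Nat.zero_sub]
    · rw [T.dep_eq_dep_par_add_one hv, Nat.add_sub_add_right]

theorem iterate_par_eq_root {k : ℕ} {v : V} (h : T.dep v ≤ k) : T.par^[k] v = T.root := by
  rw [← Nat.sub_add_cancel h, Function.iterate_add_apply, T.iterate_par_dep,
    Function.iterate_fixed T.par_root]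

/-- The vertices of the subtree rooted at `u`, including `u` itself. -/
def descendants (u : V) : Set V := {v | ∃ k, T.par^[k] v = u}

theorem mem_descendants_iff {u v : V} :
    v ∈ T.descendants u ↔ T.dep u ≤ T.dep v ∧ T.par^[T.dep v - T.dep u] v = u := by
  refine ⟨?_, fun h => ⟨_, h.2⟩⟩
  rintro ⟨k, rfl⟩
  rw [T.dep_iterate_par]
  refine ⟨Nat.sub_le _ _, ?_⟩
  obtain hk | hk := le_total k (T.dep v)
  · rw [Nat.sub_sub_self hk]
  · rw [Nat.sub_eq_zero_of_le hk, Nat.sub_zero, T.iterate_par_dep, T.iterate_par_eq_root hk]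

theorem mem_descendants_of_mem_chi {u v : V} (h : v ∈ T.chi u) : v ∈ T.descendants u := ⟨1, h.2⟩

theorem dep_of_mem_chi {u v : V} (h : v ∈ T.chi u) : T.dep v = T.dep u + 1 := by
  rw [T.dep_eq_dep_par_add_one h.1, h.2]

end Depth

section Rays

/-- The ancestor order, with the root as least element: `u ≤ v` when `v` descends from `u`. -/
abbrev ancestorOrder : PartialOrder V where
  le u v := v ∈ T.descendants u
  le_refl _ := ⟨0, rfl⟩
  le_trans u v w := by
    rintro ⟨j, rfl⟩ ⟨k, rfl⟩
    exact ⟨j + k, Function.iterate_add_apply _ _ _ _⟩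
  le_antisymm u v huv hvu := by
    rw [T.mem_descendants_iff] at huv hvu
    simpa only [le_antisymm huv.1 hvu.1, Nat.sub_self, Function.iterate_zero, id_eq, eq_comm]
      using huv.2

/-- A ray: an infinite path that starts at the root and descends to a child at each step. -/
structure IsRay (p : ℕ → V) : Prop where
  zero : p 0 = T.root
  succ_mem_chi : ∀ n, p (n + 1) ∈ T.chi (p n)

theorem strictMono_dep : @StrictMono V ℕ T.ancestorOrder.toPreorder _ T.dep := by
  let _ := T.ancestorOrder
  intro u v huv
  have hle := T.mem_descendants_iff.1 huv.le
  refine hle.1.lt_of_ne fun hdep => huv.ne ?_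
  simpa only [hdep, Nat.sub_self, Function.iterate_zero, id_eq, eq_comm] using hle.2

theorem mem_chi_of_covBy {u v : V} (h : @CovBy V T.ancestorOrder.toLT u v) : v ∈ T.chi u := by
  let _ := T.ancestorOrder
  have hroot : v ≠ T.root := by
    rintro rfl
    exact h.lt.not_ge (T.hroot u)
  have hpar : T.par v < v :=
    lt_of_le_of_ne ⟨1, rfl⟩ fun heq => by
      have hdep := T.dep_eq_dep_par_add_one hroot
      rw [heq] at hdep
      omega
  obtain ⟨k, hk⟩ := h.le
  cases k with
  | zero => exact absurd hk.symm h.ne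
  | succ k => exact ⟨hroot, (h.eq_or_eq ⟨k, hk⟩ hpar.le).resolve_right hpar.ne⟩

theorem exists_isRay [Infinite V] (hfin : ∀ u, (T.chi u).Finite) : ∃ p, T.IsRay p := by
  let _ := T.ancestorOrder
  have := T.strictMono_dep.wellFoundedLT
  have hroot : Set.Ici T.root = Set.univ := Set.eq_univ_of_forall T.hroot
  obtain ⟨p, hp0, hp⟩ := exists_seq_covby_of_forall_covby_finite
    (fun u => (hfin u).subset fun _ => T.mem_chi_of_covBy) (hroot ▸ Set.infinite_univ)
  exact ⟨p, hp0, fun n => T.mem_chi_of_covBy (hp n)⟩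

end Rays

namespace IsRay

variable {T} {p : ℕ → V} (hp : T.IsRay p)
include hp

theorem dep_apply (n : ℕ) : T.dep (p n) = n := by
  induction n with
  | zero => rw [hp.zero, T.dep_root]
  | succ n ih => rw [T.dep_of_mem_chi (hp.succ_mem_chi n), ih]

theorem injective : Function.Injective p := Function.LeftInverse.injective hp.dep_apply

theorem iterate_par_apply (k n : ℕ) : T.par^[k] (p n) = p (n - k) := by
  induction k generalizing n with
  | zero => rfl
  | succ k ih =>
    rw [Function.iterate_succ_apply]
    cases n with
    | zero => rw [hp.zero, T.par_root, ← hp.zero, ih, Nat.zero_sub, Nat.zero_sub]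
    | succ n => rw [(hp.succ_mem_chi n).2, ih, Nat.add_sub_add_right]

theorem mem_descendants_iff {u : V} {n : ℕ} : p n ∈ T.descendants u ↔ ∃ k ≤ n, p k = u := by
  constructor
  · rintro ⟨k, rfl⟩
    exact ⟨n - k, Nat.sub_le _ _, (hp.iterate_par_apply k n).symm⟩
  · rintro ⟨k, hk, rfl⟩
    exact ⟨n - k, by rw [hp.iterate_par_apply, Nat.sub_sub_self hk]⟩

end IsRay

section Operator

open scoped Classical in
theorem cesaro_single (u : V) :
    T.cesaro (Pi.single u 1) = (T.descendants u).indicator fun v => (T.dep v + 1 : ℂ)⁻¹ := by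
  ext v
  unfold cesaro
  by_cases hv : v ∈ T.descendants u
  · obtain ⟨hdep, hu⟩ := T.mem_descendants_iff.1 hv
    rw [Set.indicator_of_mem hv, Finset.sum_eq_single (T.dep v - T.dep u), hu, Pi.single_eq_same,
      mul_one]
    · intro j hj hne
      refine Pi.single_eq_of_ne (fun hju => hne ?_) _
      have hdepj := T.dep_iterate_par j v
      rw [hju] at hdepj
      rw [Finset.mem_range] at hj
      omega
    · intro hmem
      exact absurd (Finset.mem_range.2 (by omega)) hmem
  · rw [Set.indicator_of_notMem hv, Finset.sum_eq_zero, mul_zero]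
    exact fun j _ => Pi.single_eq_of_ne (fun hju => hv ⟨j, hju⟩) _

variable {T} {C : L2 V →L[ℂ] L2 V} (hC : ∀ (f : L2 V) (v : V), C f v = T.cesaro ⇑f v)
include hC

theorem finite_chi (u : V) : (T.chi u).Finite := by
  classical
  have hsum := (lp.memℓp (C (lp.single 2 u 1))).summable (by norm_num)
  have hchi : ∀ v ∈ T.chi u, C (lp.single 2 u 1) v = ((T.dep u + 1 : ℕ) + 1 : ℂ)⁻¹ := by
    intro v hv
    rw [hC, lp.coeFn_single, T.cesaro_single,
      Set.indicator_of_mem (T.mem_descendants_of_mem_chi hv), T.dep_of_mem_chi hv]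
  have hpos : 0 < ‖((T.dep u + 1 : ℕ) + 1 : ℂ)⁻¹‖ ^ (2 : ℝ≥0∞).toReal :=
    Real.rpow_pos_of_pos (norm_pos_iff.2 (inv_ne_zero (Nat.cast_add_one_ne_zero _))) _
  refine (hsum.tendsto_cofinite_zero.eventually_lt_const hpos).subset fun v hv hlt => ?_
  rw [Set.mem_ofPred_eq, hchi v hv] at hlt
  exact lt_irrefl _ hlt

theorem adjoint_apply (g : L2 V) (u : V) :
    ContinuousLinearMap.adjoint C g u =
      ∑' v, (T.descendants u).indicator (fun v => (T.dep v + 1 : ℂ)⁻¹ * g v) v := by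
  classical
  have hinner : ContinuousLinearMap.adjoint C g u = inner ℂ (C (lp.single 2 u 1)) g := by
    rw [← ContinuousLinearMap.adjoint_inner_right, lp.inner_single_left, RCLike.inner_apply,
      map_one, mul_one]
  rw [hinner, lp.inner_eq_tsum]
  congr with v
  rw [hC, lp.coeFn_single, T.cesaro_single, RCLike.inner_apply]
  by_cases hv : v ∈ T.descendants u <;> simp [hv, mul_comm]

variable {p : ℕ → V} (hp : T.IsRay p) {g : L2 V} (hg : Function.support g ⊆ Set.range p)
include hp hg

theorem adjoint_apply_ray (N : ℕ) :
    ContinuousLinearMap.adjoint C g (p N) =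
      ∑' n : ℕ, ((n + N : ℕ) + 1 : ℂ)⁻¹ * g (p (n + N)) := by
  have hinj : Function.Injective fun n => p (n + N) := hp.injective.comp (add_left_injective N)
  rw [adjoint_apply hC, ← hinj.tsum_eq]
  · congr with n
    rw [Set.indicator_of_mem (hp.mem_descendants_iff.2 ⟨N, Nat.le_add_left _ _, rfl⟩),
      hp.dep_apply]
  · rw [Set.support_indicator]
    rintro v ⟨hv, hgv⟩
    obtain ⟨n, rfl⟩ := hg (right_ne_zero_of_mul hgv)
    obtain ⟨k, hk, hkN⟩ := hp.mem_descendants_iff.1 hv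
    obtain rfl := hp.injective hkN
    exact ⟨n - k, congrArg p (Nat.sub_add_cancel hk)⟩

theorem adjoint_apply_of_notMem_ray {u : V} (hu : u ∉ Set.range p) :
    ContinuousLinearMap.adjoint C g u = 0 := by
  have hzero (v : V) :
      (T.descendants u).indicator (fun v => (T.dep v + 1 : ℂ)⁻¹ * g v) v = 0 := by
    rw [Set.indicator_apply_eq_zero]
    intro hv
    by_contra hne
    obtain ⟨n, rfl⟩ := hg (right_ne_zero_of_mul hne)
    obtain ⟨k, -, hk⟩ := hp.mem_descendants_iff.1 hv
    exact hu ⟨k, hk⟩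
  rw [adjoint_apply hC, tsum_congr hzero, tsum_zero]

end Operator

end TreeData

theorem adjoint_cesaro_eigenvalues_general {V : Type} [Infinite V] (T : TreeData V)
    (C : L2 V →L[ℂ] L2 V) (hC : ∀ (f : L2 V) (v : V), C f v = T.cesaro ⇑f v)
    (lam : ℂ) (hlam : ‖lam - 1‖ < 1) :
    ∃ g : L2 V, g ≠ 0 ∧ ContinuousLinearMap.adjoint C g = lam • g := by
  obtain ⟨p, hp⟩ := T.exists_isRay (TreeData.finite_chi hC)
  have hre := one_half_lt_re_inv hlam
  let g : L2 V := ⟨Function.extend p (cesaroCoeff lam⁻¹) 0,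
    memℓp_extend (by norm_num) hp.injective (memℓp_cesaroCoeff hre)⟩
  have hg_ray (n : ℕ) : g (p n) = cesaroCoeff lam⁻¹ n := hp.injective.extend_apply _ _ _
  have hg_off {u : V} (hu : u ∉ Set.range p) : g u = 0 := Function.extend_apply' _ _ _ hu
  have hsupp : Function.support g ⊆ Set.range p := fun u hgu => by_contra fun hu => hgu (hg_off hu)
  refine ⟨g, fun h => ?_, lp.ext (funext fun u => ?_)⟩
  · have hg0 := hg_ray 0
    rw [h, cesaroCoeff_zero] at hg0
    exact zero_ne_one hg0
  · rw [lp.coeFn_smul, Pi.smul_apply, smul_eq_mul]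
    by_cases hu : u ∈ Set.range p
    · obtain ⟨N, rfl⟩ := hu
      rw [TreeData.adjoint_apply_ray hC hp hsupp, hg_ray, tsum_congr fun n => by rw [hg_ray],
        (hasSum_inv_mul_cesaroCoeff hre N).tsum_eq, inv_inv]
    · rw [TreeData.adjoint_apply_of_notMem_ray hC hp hsupp hu, hg_off hu, mul_zero]

/-- For a narrow rooted directed tree, every `λ` with `|λ - 1| < 1` is an
eigenvalue of the adjoint `C_T*` of the bounded Cesàro operator. -/
theorem adjoint_cesaro_eigenvalues {V : Type} [Countable V] [Infinite V]
    (T : TreeData V) (m : ℕ) (hm : ∀ n : ℕ, (T.level n).encard ≤ m)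
    (C : L2 V →L[ℂ] L2 V) (hC : ∀ (f : L2 V) (v : V), C f v = T.cesaro ⇑f v)
    (lam : ℂ) (hlam : ‖lam - 1‖ < 1) :
    ∃ g : L2 V, g ≠ 0 ∧ ContinuousLinearMap.adjoint C g = lam • g :=
  adjoint_cesaro_eigenvalues_general T C hC lam hlam
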